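/- Suppose g(r) = o(r^{-c}) as r → ∞ for some c > d, and fix γ > 1. Let δ_n denote the minimum vertex degree of G_n(r̂_n(γ)). Then almost surely, liminf_{n→∞} δ_n/(log n) ≥ γ·H₋⁻¹(1/γ). -/

import Mathlib

open MeasureTheory ProbabilityTheory Filter Set

noncomputable section

namespace RCM

/-- The toroidal metric on the unit cube. -/
def torusDist {d : ℕ} (x y : EuclideanSpace ℝ (Fin d)) : ℝ :=
  ⨅ z : Fin d → ℤ, ‖x - y - (WithLp.equiv 2 (Fin d → ℝ)).symm (fun i => (z i : ℝ))‖

/-- The half-open unit cube `S = (-1/2, 1/2]^d`. -/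
def cube (d : ℕ) : Set (EuclideanSpace ℝ (Fin d)) :=
  {x | ∀ i, x i ∈ Set.Ioc (-(1/2) : ℝ) (1/2)}

/-- The random connection model: i.i.d. uniform points `X`, coupled Poisson counts `N`,
i.i.d. uniform edge variables `U`, with the three families mutually independent, and a
non-increasing connection function `g : [0,∞) → [0,1]` with finite positive integral `α`. -/
structure Model (d : ℕ) {Ω : Type*} [MeasurableSpace Ω] (P : Measure Ω) where
  g : ℝ → ℝ
  α : ℝ
  X : ℕ → Ω → EuclideanSpace ℝ (Fin d)
  N : ℕ → Ω → ℕ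
  U : ℕ → ℕ → Ω → ℝ
  g_antitone : AntitoneOn g (Set.Ici 0)
  g_mem : ∀ r : ℝ, 0 ≤ r → g r ∈ Set.Icc (0 : ℝ) 1
  g_integrable : MeasureTheory.Integrable (fun x : EuclideanSpace ℝ (Fin d) => g ‖x‖)
  α_def : α = ∫ x : EuclideanSpace ℝ (Fin d), g ‖x‖
  α_pos : 0 < α
  X_meas : ∀ i, Measurable (X i)
  X_unif : ∀ i : ℕ, 1 ≤ i → Measure.map (X i) P = volume.restrict (cube d)
  X_indep : iIndepFun
    (fun i : {i : ℕ // 1 ≤ i} => X i) P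
  N_meas : ∀ n, Measurable (N n)
  N_mono : ∀ ω, Monotone fun n => N n ω
  N_poisson : ∀ n k : ℕ,
    P {ω | N n ω = k} = ENNReal.ofReal (Real.exp (-(n : ℝ)) * (n : ℝ) ^ k / k.factorial)
  U_meas : ∀ i j, Measurable (U i j)
  U_unif : ∀ i j : ℕ, 1 ≤ i → i < j →
    Measure.map (U i j) P = volume.restrict (Set.Icc (0 : ℝ) 1)
  U_indep : iIndepFun
    (fun p : {p : ℕ × ℕ // 1 ≤ p.1 ∧ p.1 < p.2} => U p.1.1 p.1.2) P
  families_indep : iIndep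
    (![MeasurableSpace.comap (fun ω => fun i : ℕ => X i ω) inferInstance,
       MeasurableSpace.comap (fun ω => fun n : ℕ => N n ω) inferInstance,
       MeasurableSpace.comap (fun ω => fun p : ℕ × ℕ => U p.1 p.2 ω) inferInstance]) P

variable {d : ℕ} {Ω : Type*} [MeasurableSpace Ω] {P : Measure Ω}

/-- Adjacency in the graph `G_n(r)`: vertices `1 ≤ i,j ≤ N_n` are joined iff
`U_{ij} ≤ g(dist(X_i,X_j)/r)`. -/
def adj (M : Model d P) (n : ℕ) (r : ℝ) (ω : Ω) (i j : ℕ) : Prop :=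
  i ≠ j ∧ 1 ≤ i ∧ 1 ≤ j ∧ i ≤ M.N n ω ∧ j ≤ M.N n ω ∧
    M.U (min i j) (max i j) ω ≤ M.g (torusDist (M.X i ω) (M.X j ω) / r)

/-- The degree of vertex `i` in `G_n(r)`. -/
def deg (M : Model d P) (n : ℕ) (r : ℝ) (ω : Ω) (i : ℕ) : ℕ :=
  {j : ℕ | adj M n r ω i j}.ncard

/-- `W_n(r)`, the number of isolated vertices of `G_n(r)`. -/
def isolatedCount (M : Model d P) (n : ℕ) (r : ℝ) (ω : Ω) : ℕ :=
  {i : ℕ | 1 ≤ i ∧ i ≤ M.N n ω ∧ deg M n r ω i = 0}.ncard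


/-- `r̂_n(γ)` defined by `r̂_n(γ)^d = γ log n / (α n)`. -/
def rhat (M : Model d P) (γ : ℝ) (n : ℕ) : ℝ :=
  (γ * Real.log n / (M.α * n)) ^ ((1 : ℝ) / d)

/-- `d_n`, the critical parameter for absence of isolated nodes. -/
def critRadius (M : Model d P) (n : ℕ) (ω : Ω) : ℝ :=
  sInf {r : ℝ | 0 < r ∧ isolatedCount M n r ω = 0}

/-- The maximum vertex degree `Δ_n` of `G_n(r)`. -/
def maxDeg (M : Model d P) (n : ℕ) (r : ℝ) (ω : Ω) : ℕ :=
  (Finset.Icc 1 (M.N n ω)).sup (deg M n r ω)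

/-- The minimum vertex degree `δ_n` of `G_n(r)`. -/
def minDeg (M : Model d P) (n : ℕ) (r : ℝ) (ω : Ω) : ℕ :=
  sInf {k : ℕ | ∃ i, 1 ≤ i ∧ i ≤ M.N n ω ∧ deg M n r ω i = k}

/-- The length (toroidal metric) of the longest edge of `G_n(r)` (`0` if there are no edges). -/
def longestEdge (M : Model d P) (n : ℕ) (r : ℝ) (ω : Ω) : ℝ :=
  sSup ({0} ∪ {t : ℝ | ∃ i j, adj M n r ω i j ∧ t = torusDist (M.X i ω) (M.X j ω)})

/-- Connectivity of `G_n(r)`: any two vertices are joined by a path. -/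
def connectedGraph (M : Model d P) (n : ℕ) (r : ℝ) (ω : Ω) : Prop :=
  ∀ i j : ℕ, 1 ≤ i → i ≤ M.N n ω → 1 ≤ j → j ≤ M.N n ω →
    Relation.ReflTransGen (adj M n r ω) i j

/-- `H(x) = 1 - x + x log x` (with `H(0) = 1`, since `log 0 = 0` in Lean). -/
def H (x : ℝ) : ℝ := 1 - x + x * Real.log x

/-- The inverse of the restriction of `H` to `[1, ∞)`. -/
def Hplusinv (y : ℝ) : ℝ := sInf {x : ℝ | 1 ≤ x ∧ y ≤ H x}

/-- The inverse of the restriction of `H` to `[0, 1]`. -/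
def Hminusinv (y : ℝ) : ℝ := sInf {x : ℝ | 0 ≤ x ∧ H x ≤ y}

/-- The standard normal distribution function. -/
def stdNormalCDF (x : ℝ) : ℝ :=
  ∫ t in Set.Iic x, Real.exp (-t ^ 2 / 2) / Real.sqrt (2 * Real.pi)

open scoped Pointwise

/-! ### Independence -/

lemma lintegral_prod_comp_indep [IsProbabilityMeasure P] {ι A B : Type*} [Fintype ι]
    [MeasurableSpace A] [MeasurableSpace B] {Y : Ω → A} {Z : ι → Ω → B}
    (hY : Measurable Y) (hZ : ∀ i, Measurable (Z i))
    (hYZ : IndepFun Y (fun ω i => Z i ω) P) (hind : iIndepFun Z P)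
    {F : ι → A → B → ENNReal} (hF : ∀ i, Measurable (Function.uncurry (F i))) :
    ∫⁻ ω, ∏ i, F i (Y ω) (Z i ω) ∂P = ∫⁻ ω, ∏ i, ∫⁻ ω', F i (Y ω) (Z i ω') ∂P ∂P := by
  have hZ' : Measurable (fun ω i => Z i ω) := measurable_pi_lambda _ hZ
  have hmap := (indepFun_iff_map_prod_eq_prod_map_map hY.aemeasurable hZ'.aemeasurable).1 hYZ
  have hFm : Measurable (fun p : A × (ι → B) => ∏ i, F i p.1 (p.2 i)) := by
    refine Finset.measurable_prod _ fun i _ => ?_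
    exact (hF i).comp (measurable_fst.prodMk ((measurable_pi_apply i).comp measurable_snd))
  have h1 : ∫⁻ ω, ∏ i, F i (Y ω) (Z i ω) ∂P
      = ∫⁻ p, ∏ i, F i p.1 (p.2 i) ∂(P.map fun ω => (Y ω, fun i => Z i ω)) :=
    (lintegral_map hFm (hY.prodMk hZ')).symm
  have := Measure.isProbabilityMeasure_map (μ := P) hZ'.aemeasurable
  have := Measure.isProbabilityMeasure_map (μ := P) hY.aemeasurable
  rw [h1, hmap, lintegral_prod _ hFm.aemeasurable, lintegral_map hFm.lintegral_prod_right' hY]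
  refine lintegral_congr fun ω => ?_
  have hsec : ∀ i, Measurable (F i (Y ω)) := fun i => (hF i).comp measurable_prodMk_left
  have hFs : Measurable fun z : ι → B => ∏ i, F i (Y ω) (z i) := hFm.comp measurable_prodMk_left
  refine (lintegral_map hFs hZ').trans ?_
  exact lintegral_prod_eq_prod_lintegral_of_indepFun Finset.univ
    (fun i ω' => F i (Y ω) (Z i ω')) (hind.comp (fun i => F i (Y ω)) hsec)
    fun i => (hsec i).comp (hZ i)

/-! ### The torus -/

lemma torusDist_nonneg (x y : EuclideanSpace ℝ (Fin d)) : 0 ≤ torusDist x y :=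
  Real.iInf_nonneg fun _ => norm_nonneg _

lemma measurable_torusDist {A : Type*} [MeasurableSpace A]
    {f h : A → EuclideanSpace ℝ (Fin d)} (hf : Measurable f) (hh : Measurable h) :
    Measurable fun a => torusDist (f a) (h a) := by
  unfold torusDist
  refine Measurable.iInf fun z => ?_
  fun_prop

/-- The integer vector `z` seen as a point of Euclidean space. -/
def intVec (d : ℕ) : (Fin d → ℤ) →+ EuclideanSpace ℝ (Fin d) where
  toFun z := (WithLp.equiv 2 (Fin d → ℝ)).symm (fun i => (z i : ℝ))
  map_zero' := by ext i; simp
  map_add' x y := by ext i; simp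

lemma intVec_apply (z : Fin d → ℤ) (i : Fin d) : intVec d z i = z i := rfl

lemma torusDist_sub_intVec (x y : EuclideanSpace ℝ (Fin d)) (z : Fin d → ℤ) :
    torusDist x (intVec d z + y) = torusDist x y := by
  unfold torusDist
  refine (Equiv.iInf_congr (Equiv.addRight z) fun w => ?_)
  congr 1
  ext i
  simp [intVec_apply]
  ring

lemma torusDist_eq_norm_of_mem_cube {x y : EuclideanSpace ℝ (Fin d)} (h : x - y ∈ cube d) :
    torusDist x y = ‖x - y‖ := by
  refine le_antisymm ?_ ?_
  · have : BddBelow (range fun z : Fin d → ℤ =>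
        ‖x - y - (WithLp.equiv 2 (Fin d → ℝ)).symm (fun i => (z i : ℝ))‖) :=
      ⟨0, by rintro _ ⟨z, rfl⟩; exact norm_nonneg _⟩
    refine (ciInf_le this 0).trans (le_of_eq ?_)
    congr 1
    ext i
    simp
  · refine le_ciInf fun z => ?_
    rw [EuclideanSpace.norm_eq, EuclideanSpace.norm_eq]
    refine Real.sqrt_le_sqrt (Finset.sum_le_sum fun i _ => ?_)
    obtain ⟨h1, h2⟩ := h i
    set w := (x - y) i with hw
    have hz : (x - y - (WithLp.equiv 2 (Fin d → ℝ)).symm (fun i => (z i : ℝ))) i = w - z i := by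
      simp [hw]
    rw [hz, Real.norm_eq_abs, Real.norm_eq_abs, sq_abs, sq_abs]
    rcases lt_trichotomy (z i) 0 with h0 | h0 | h0
    · have : (z i : ℝ) ≤ -1 := by exact_mod_cast (by omega : z i ≤ -1)
      nlinarith
    · simp [h0]
    · have : (1 : ℝ) ≤ z i := by exact_mod_cast h0
      nlinarith

lemma measurableSet_cube : MeasurableSet (cube d) := by
  have : cube d = ⋂ i, (fun x : EuclideanSpace ℝ (Fin d) => x i) ⁻¹' Ioc (-(1/2)) (1/2) := by
    ext x; simp [cube]
  rw [this]
  refine MeasurableSet.iInter fun i => ?_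
  exact measurableSet_Ioc.preimage (by fun_prop)

lemma existsUnique_intVec_add_mem_cube (x : EuclideanSpace ℝ (Fin d)) :
    ∃! l : (intVec d).range, (l : EuclideanSpace ℝ (Fin d)) + x ∈ cube d := by
  have h := fun i => existsUnique_add_zsmul_mem_Ioc (one_pos : (0 : ℝ) < 1) (x i) (-(1/2))
  choose z hz huniq using h
  refine ⟨⟨intVec d z, z, rfl⟩, fun i => ?_, ?_⟩
  · have := hz i
    simp only [zsmul_eq_mul, mul_one] at this
    simp only [PiLp.add_apply, intVec_apply]
    constructor <;> linarith [this.1, this.2]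
  · rintro ⟨_, w, rfl⟩ hw
    refine Subtype.ext (congrArg (intVec d) (funext fun i => huniq i _ ?_))
    have := hw i
    simp only [PiLp.add_apply, intVec_apply] at this
    simp only [zsmul_eq_mul, mul_one]
    constructor <;> linarith [this.1, this.2]

instance : Countable (intVec d).range :=
  (countable_range (intVec d)).to_subtype

lemma isAddFundamentalDomain_cube :
    IsAddFundamentalDomain (intVec d).range (cube d) :=
  .mk' measurableSet_cube.nullMeasurableSet existsUnique_intVec_add_mem_cube

lemma isAddFundamentalDomain_sub_cube (x : EuclideanSpace ℝ (Fin d)) :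
    IsAddFundamentalDomain (intVec d).range ((fun y => x - y) ⁻¹' cube d) := by
  refine .mk' (measurableSet_cube.preimage (by fun_prop)).nullMeasurableSet fun y => ?_
  obtain ⟨l, hl, huniq⟩ := existsUnique_intVec_add_mem_cube (x - y)
  have key : ∀ m : (intVec d).range, x - (m +ᵥ y)
      = ((-m : (intVec d).range) : EuclideanSpace ℝ (Fin d)) + (x - y) := by
    intro m
    rw [AddSubgroup.vadd_def, vadd_eq_add, AddSubgroup.coe_neg]
    abel
  refine ⟨-l, ?_, fun m hm => ?_⟩
  · simpa only [mem_preimage, key, neg_neg] using hl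
  · simp only [mem_preimage, key] at hm
    rw [← huniq _ hm, neg_neg]

lemma setIntegral_cube_torusDist (f : ℝ → ℝ) (x : EuclideanSpace ℝ (Fin d)) :
    ∫ y in cube d, f (torusDist x y) = ∫ w in cube d, f ‖w‖ := by
  have h1 : ∫ y in cube d, f (torusDist x y)
      = ∫ y in (fun y => x - y) ⁻¹' cube d, f (torusDist x y) := by
    refine isAddFundamentalDomain_cube.setIntegral_eq (isAddFundamentalDomain_sub_cube x) ?_
    rintro ⟨_, z, rfl⟩ y
    rw [AddSubgroup.vadd_def, vadd_eq_add, torusDist_sub_intVec]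
  have h2 : ∫ y in (fun y => x - y) ⁻¹' cube d, f (torusDist x y)
      = ∫ y in (fun y => x - y) ⁻¹' cube d, f ‖x - y‖ :=
    setIntegral_congr_fun (measurableSet_cube.preimage (by fun_prop)) fun y hy => by
      simp only [torusDist_eq_norm_of_mem_cube hy]
  rw [h1, h2]
  exact (Measure.measurePreserving_sub_left volume x).setIntegral_preimage_emb
    (Homeomorph.subLeft x).measurableEmbedding (fun w => f ‖w‖) _

/-! ### The connection probability -/

/-- The probability that two given vertices are joined at scale `r`. -/
def connProb (M : Model d P) (r : ℝ) : ℝ := ∫ w in cube d, M.g (‖w‖ / r)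

lemma connProb_eq (M : Model d P) {r : ℝ} (hr : 0 < r) :
    connProb M r = r ^ d * ∫ v in r⁻¹ • cube d, M.g ‖v‖ := by
  have h := Measure.setIntegral_comp_smul (volume : Measure (EuclideanSpace ℝ (Fin d)))
    (fun v => M.g ‖v‖) (cube d) (inv_ne_zero hr.ne')
  have h1 : ∀ w : EuclideanSpace ℝ (Fin d), ‖r⁻¹ • w‖ = ‖w‖ / r := fun w => by
    rw [norm_smul, norm_inv, Real.norm_eq_abs, abs_of_pos hr]; ring
  simp only [h1, finrank_euclideanSpace_fin, smul_eq_mul] at h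
  rw [connProb, h, inv_pow, inv_inv, abs_of_pos (pow_pos hr d)]

lemma connProb_le (M : Model d P) {r : ℝ} (hr : 0 < r) : connProb M r ≤ M.α * r ^ d := by
  rw [connProb_eq M hr, mul_comm, M.α_def]
  exact mul_le_mul_of_nonneg_right (setIntegral_le_integral M.g_integrable
    (Eventually.of_forall fun v => (M.g_mem _ (norm_nonneg v)).1)) (pow_pos hr d).le

lemma tendsto_connProb_div (M : Model d P) {r : ℕ → ℝ} (hpos : ∀ᶠ k in atTop, 0 < r k)
    (hr : Tendsto r atTop (nhds 0)) :
    Tendsto (fun k => connProb M (r k) / r k ^ d) atTop (nhds M.α) := by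
  have hmeas : ∀ k, MeasurableSet ((fun v => r k • v) ⁻¹' cube d) := fun k =>
    measurableSet_cube.preimage (by fun_prop)
  have heq : (fun k => ∫ v, ((fun v => r k • v) ⁻¹' cube d).indicator (fun v => M.g ‖v‖) v)
      =ᶠ[atTop] fun k => connProb M (r k) / r k ^ d := by
    filter_upwards [hpos] with k hk
    rw [connProb_eq M hk, mul_div_cancel_left₀ _ (pow_pos hk d).ne', integral_indicator (hmeas k),
      ← preimage_smul_inv₀ (inv_ne_zero hk.ne'), inv_inv]
  refine Tendsto.congr' heq ?_
  rw [M.α_def]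
  refine tendsto_integral_of_dominated_convergence (fun v => M.g ‖v‖)
    (fun k => M.g_integrable.aestronglyMeasurable.indicator (hmeas k)) M.g_integrable
    (fun k => Eventually.of_forall fun v => ?_) (Eventually.of_forall fun v => ?_)
  · refine (norm_indicator_le_norm_self _ _).trans (le_of_eq ?_)
    rw [Real.norm_eq_abs, abs_of_nonneg (M.g_mem _ (norm_nonneg v)).1]
  · refine tendsto_const_nhds.congr' ?_
    have h1 : ∀ i, ∀ᶠ k in atTop, r k * v i ∈ Ioo (-(1/2) : ℝ) (1/2) := fun i => by
      have : Tendsto (fun k => r k * v i) atTop (nhds (0 * v i)) := hr.mul_const _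
      rw [zero_mul] at this
      exact this.eventually (Ioo_mem_nhds (by norm_num) (by norm_num))
    filter_upwards [eventually_all.2 h1] with k hk
    rw [indicator_of_mem]
    intro i
    exact ⟨(hk i).1, (hk i).2.le⟩

lemma volume_cube [IsProbabilityMeasure P] (M : Model d P) :
    IsProbabilityMeasure (volume.restrict (cube d)) := by
  rw [← M.X_unif 1 le_rfl]
  exact Measure.isProbabilityMeasure_map (M.X_meas 1).aemeasurable

lemma measurable_g_torusDist (M : Model d P) {r : ℝ} (hr : 0 < r) {A : Type*} [MeasurableSpace A]
    {f h : A → EuclideanSpace ℝ (Fin d)} (hf : Measurable f) (hh : Measurable h) :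
    Measurable fun a => M.g (torusDist (f a) (h a) / r) := by
  have hanti : Antitone fun t => M.g (max t 0) := fun s t hst =>
    M.g_antitone (mem_Ici.2 (le_max_right s 0)) (mem_Ici.2 (le_max_right t 0))
      (max_le_max_right 0 hst)
  have heq : (fun a => M.g (torusDist (f a) (h a) / r))
      = fun a => (fun t => M.g (max t 0)) (torusDist (f a) (h a) / r) := by
    ext a
    simp only
    rw [max_eq_left (div_nonneg (torusDist_nonneg _ _) hr.le)]
  rw [heq]
  exact hanti.measurable.comp ((measurable_torusDist hf hh).div_const r)

lemma g_torusDist_mem (M : Model d P) {r : ℝ} (hr : 0 < r) (x y : EuclideanSpace ℝ (Fin d)) :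
    M.g (torusDist x y / r) ∈ Icc (0 : ℝ) 1 :=
  M.g_mem _ (div_nonneg (torusDist_nonneg _ _) hr.le)

lemma lintegral_cube_one_sub [IsProbabilityMeasure P] (M : Model d P) {r s : ℝ} (hr : 0 < r)
    (hs : s ∈ Icc (0 : ℝ) 1) (x : EuclideanSpace ℝ (Fin d)) :
    ∫⁻ y in cube d, ENNReal.ofReal (1 - (1 - s) * M.g (torusDist x y / r))
      = ENNReal.ofReal (1 - (1 - s) * connProb M r) := by
  have := volume_cube M
  have hm : Measurable fun y => M.g (torusDist x y / r) :=
    measurable_g_torusDist M hr measurable_const measurable_id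
  have hgint : Integrable (fun y => M.g (torusDist x y / r)) (volume.restrict (cube d)) :=
    .of_mem_Icc 0 1 hm.aemeasurable (Eventually.of_forall fun y => g_torusDist_mem M hr x y)
  have hgint' : Integrable (fun y => 1 - (1 - s) * M.g (torusDist x y / r))
      (volume.restrict (cube d)) := (integrable_const 1).sub (hgint.const_mul _)
  rw [← ofReal_integral_eq_lintegral_ofReal hgint']
  · rw [integral_sub (integrable_const 1) (hgint.const_mul _), integral_const_mul,
      setIntegral_cube_torusDist (fun t => M.g (t / r)) x, connProb]
    simp
  · refine Eventually.of_forall fun y => ?_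
    have h := g_torusDist_mem M hr x y
    simp only [Pi.zero_apply]
    nlinarith [h.1, h.2, hs.1, hs.2]

lemma lintegral_uniform_ite {s t : ℝ} (hs : s ∈ Icc (0 : ℝ) 1) (ht : t ∈ Icc (0 : ℝ) 1) :
    ∫⁻ u in Icc (0 : ℝ) 1, (if u ≤ t then ENNReal.ofReal s else 1)
      = ENNReal.ofReal (1 - (1 - s) * t) := by
  have h : ∀ u, (if u ≤ t then ENNReal.ofReal s else 1)
      = (Iic t).indicator (fun _ => ENNReal.ofReal s) u + (Ioi t).indicator (fun _ => 1) u := by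
    intro u
    by_cases hu : u ≤ t
    · simp [hu]
    · simp [hu, not_le.1 hu]
  simp_rw [h]
  rw [lintegral_add_left (measurable_const.indicator measurableSet_Iic),
    lintegral_indicator_const measurableSet_Iic, lintegral_indicator_const measurableSet_Ioi,
    Measure.restrict_apply measurableSet_Iic, Measure.restrict_apply measurableSet_Ioi]
  have h1 : Iic t ∩ Icc 0 1 = Icc 0 t := by
    ext u; simp only [mem_inter_iff, mem_Iic, mem_Icc]
    exact ⟨fun h => ⟨h.2.1, h.1⟩, fun h => ⟨h.2, h.1, h.2.trans ht.2⟩⟩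
  have h2 : Ioi t ∩ Icc 0 1 = Ioc t 1 := by
    ext u; simp only [mem_inter_iff, mem_Ioi, mem_Icc, mem_Ioc]
    exact ⟨fun h => ⟨h.1, h.2.2⟩, fun h => ⟨h.1, ht.1.trans h.1.le, h.2⟩⟩
  rw [h1, h2, Real.volume_Icc, Real.volume_Ioc, one_mul, ← ENNReal.ofReal_mul hs.1,
    ← ENNReal.ofReal_add (mul_nonneg hs.1 (by linarith [ht.1])) (by linarith [ht.2])]
  congr 1
  ring

/-! ### Edges at a fixed vertex -/

/-- The edge relation at scale `r`, regardless of the number of vertices present. -/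
def edge (M : Model d P) (r : ℝ) (ω : Ω) (i j : ℕ) : Prop :=
  M.U (min i j) (max i j) ω ≤ M.g (torusDist (M.X i ω) (M.X j ω) / r)

lemma measurableSet_edge (M : Model d P) {r : ℝ} (hr : 0 < r) (i j : ℕ) :
    MeasurableSet {ω | edge M r ω i j} :=
  measurableSet_le (M.U_meas _ _) (measurable_g_torusDist M hr (M.X_meas i) (M.X_meas j))

lemma iIndepFun_edgeVars (M : Model d P) {i : ℕ} (hi : 1 ≤ i) {J : Finset ℕ}
    (hJ : ∀ j ∈ J, 1 ≤ j) (hiJ : i ∉ J) :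
    iIndepFun (fun (j : J) => M.U (min i j) (max i j)) P := by
  let e : J → {p : ℕ × ℕ // 1 ≤ p.1 ∧ p.1 < p.2} := fun j =>
    ⟨(min i j, max i j), le_min hi (hJ j j.2), min_lt_max.2 fun h => hiJ (h ▸ j.2)⟩
  refine M.U_indep.precomp (g := e) fun j k hjk => Subtype.ext ?_
  have h1 := congrArg (fun p => p.1.1) hjk
  have h2 := congrArg (fun p => p.1.2) hjk
  simp only [e] at h1 h2
  omega

lemma indepFun_positions_edgeVars (M : Model d P) (i : ℕ) (J : Finset ℕ) :
    IndepFun (fun ω (k : ℕ) => M.X k ω) (fun ω (j : J) => M.U (min i j) (max i j) ω) P := by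
  have h : IndepFun (fun ω (k : ℕ) => M.X k ω) (fun ω (p : ℕ × ℕ) => M.U p.1 p.2 ω) P :=
    (IndepFun_iff_Indep _ _ _).2 (M.families_indep.indep (i := 0) (j := 2) (by decide))
  exact h.comp measurable_id
    (ψ := fun (u : ℕ × ℕ → ℝ) (j : J) => u (min i j, max i j))
    (measurable_pi_lambda _ fun j => measurable_pi_apply _)

lemma iIndepFun_positions (M : Model d P) {J : Finset ℕ} (hJ : ∀ j ∈ J, 1 ≤ j) :
    iIndepFun (fun (j : J) => M.X j) P :=
  M.X_indep.precomp (g := fun j : J => (⟨j, hJ j j.2⟩ : {i : ℕ // 1 ≤ i}))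
    fun _ _ hjk => Subtype.ext (congrArg (fun p => p.1) hjk)

open scoped Classical in
lemma indepFun_position_positions (M : Model d P) {i : ℕ} (hi : 1 ≤ i) {J : Finset ℕ}
    (hJ : ∀ j ∈ J, 1 ≤ j) (hiJ : i ∉ J) :
    IndepFun (M.X i) (fun ω (j : J) => M.X j ω) P := by
  let T : Finset {i : ℕ // 1 ≤ i} := Finset.univ.image fun j : J => ⟨j, hJ j j.2⟩
  have hT : ∀ j : J, (⟨j, hJ j j.2⟩ : {i : ℕ // 1 ≤ i}) ∈ T := fun j =>
    Finset.mem_image_of_mem _ (Finset.mem_univ j)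
  have hdisj : Disjoint ({⟨i, hi⟩} : Finset {i : ℕ // 1 ≤ i}) T := by
    rw [Finset.disjoint_singleton_left]
    intro hmem
    obtain ⟨j, -, hj⟩ := Finset.mem_image.1 hmem
    have hji : (j : ℕ) = i := congrArg Subtype.val hj
    exact hiJ (hji ▸ j.2)
  have h := M.X_indep.indepFun_finset _ T hdisj fun k => M.X_meas k
  have hφ : Measurable fun x : ({⟨i, hi⟩} : Finset {i : ℕ // 1 ≤ i}) →
      EuclideanSpace ℝ (Fin d) => x ⟨⟨i, hi⟩, Finset.mem_singleton_self _⟩ := measurable_pi_apply _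
  have hψ : Measurable fun (x : T → EuclideanSpace ℝ (Fin d)) (j : J) =>
      x ⟨⟨j, hJ j j.2⟩, hT j⟩ := measurable_pi_lambda _ fun j => measurable_pi_apply _
  exact h.comp hφ hψ

open scoped Classical in
lemma lintegral_prod_edge_eq_positions [IsProbabilityMeasure P] (M : Model d P) {r s : ℝ}
    (hr : 0 < r) (hs : s ∈ Icc (0 : ℝ) 1) {i : ℕ} (hi : 1 ≤ i) {J : Finset ℕ}
    (hJ : ∀ j ∈ J, 1 ≤ j) (hiJ : i ∉ J) :
    ∫⁻ ω, ∏ j ∈ J, (if edge M r ω i j then ENNReal.ofReal s else 1) ∂P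
      = ∫⁻ ω, ∏ j : J,
          ENNReal.ofReal (1 - (1 - s) * M.g (torusDist (M.X i ω) (M.X j ω) / r)) ∂P := by
  have hXm : Measurable (fun ω (k : ℕ) => M.X k ω) := measurable_pi_lambda _ M.X_meas
  have hF : ∀ j : J, Measurable (Function.uncurry
      fun (x : ℕ → EuclideanSpace ℝ (Fin d)) (u : ℝ) =>
        if u ≤ M.g (torusDist (x i) (x j) / r) then ENNReal.ofReal s else 1) := fun j =>
    Measurable.ite (measurableSet_le measurable_snd (measurable_g_torusDist M hr
      ((measurable_pi_apply i).comp measurable_fst)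
      ((measurable_pi_apply (j : ℕ)).comp measurable_fst))) measurable_const measurable_const
  have hprod := lintegral_prod_comp_indep hXm (fun j : J => M.U_meas _ _)
    (indepFun_positions_edgeVars M i J) (iIndepFun_edgeVars M hi hJ hiJ) hF
  have hinner : ∀ (j : J) (t : ℝ), t ∈ Icc (0 : ℝ) 1 →
      ∫⁻ ω, (if M.U (min i j) (max i j) ω ≤ t then ENNReal.ofReal s else 1) ∂P
        = ENNReal.ofReal (1 - (1 - s) * t) := by
    intro j t ht
    rw [← lintegral_uniform_ite hs ht, ← M.U_unif (min i j) (max i j) (le_min hi (hJ j j.2))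
      (min_lt_max.2 fun h => hiJ (h ▸ j.2)), lintegral_map _ (M.U_meas _ _)]
    exact Measurable.ite measurableSet_Iic measurable_const measurable_const
  refine (lintegral_congr fun ω => ?_).trans
    (hprod.trans (lintegral_congr fun ω => Finset.prod_congr rfl fun j _ =>
      hinner j _ (g_torusDist_mem M hr _ _)))
  exact (Finset.prod_coe_sort J fun j => if edge M r ω i j then ENNReal.ofReal s else 1).symm

open scoped Classical in
lemma lintegral_prod_edge [IsProbabilityMeasure P] (M : Model d P) {r s : ℝ} (hr : 0 < r)
    (hs : s ∈ Icc (0 : ℝ) 1) {i : ℕ} (hi : 1 ≤ i) {J : Finset ℕ} (hJ : ∀ j ∈ J, 1 ≤ j)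
    (hiJ : i ∉ J) :
    ∫⁻ ω, ∏ j ∈ J, (if edge M r ω i j then ENNReal.ofReal s else 1) ∂P
      = ENNReal.ofReal (1 - (1 - s) * connProb M r) ^ J.card := by
  have hF : ∀ _ : J, Measurable (Function.uncurry
      fun x y : EuclideanSpace ℝ (Fin d) =>
        ENNReal.ofReal (1 - (1 - s) * M.g (torusDist x y / r))) := fun _ =>
    (measurable_const.sub ((measurable_g_torusDist M hr measurable_fst
      measurable_snd).const_mul (1 - s))).ennreal_ofReal
  have hprod := lintegral_prod_comp_indep (M.X_meas i) (fun j : J => M.X_meas j)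
    (indepFun_position_positions M hi hJ hiJ) (iIndepFun_positions M hJ) hF
  have hinner : ∀ (j : J) (x : EuclideanSpace ℝ (Fin d)),
      ∫⁻ ω, ENNReal.ofReal (1 - (1 - s) * M.g (torusDist x (M.X j ω) / r)) ∂P
        = ENNReal.ofReal (1 - (1 - s) * connProb M r) := by
    intro j x
    rw [← lintegral_cube_one_sub M hr hs x, ← M.X_unif j (hJ j j.2)]
    have hm : Measurable fun y => ENNReal.ofReal (1 - (1 - s) * M.g (torusDist x y / r)) :=
      (measurable_const.sub ((measurable_g_torusDist M hr measurable_const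
        measurable_id).const_mul (1 - s))).ennreal_ofReal
    exact (lintegral_map hm (M.X_meas j)).symm
  rw [lintegral_prod_edge_eq_positions M hr hs hi hJ hiJ, hprod]
  simp [hinner]

open scoped Classical in
/-- The number of vertices of `J` joined to `i` at scale `r`. -/
def edgeCount (M : Model d P) (r : ℝ) (ω : Ω) (i : ℕ) (J : Finset ℕ) : ℕ :=
  (J.filter (edge M r ω i)).card

open scoped Classical in
lemma measure_edgeCount_lt_le [IsProbabilityMeasure P] (M : Model d P) {r θ : ℝ} (hr : 0 < r)
    (hθ : 0 ≤ θ) (t : ℝ) {i : ℕ} (hi : 1 ≤ i) {J : Finset ℕ} (hJ : ∀ j ∈ J, 1 ≤ j)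
    (hiJ : i ∉ J) :
    P {ω | (edgeCount M r ω i J : ℝ) < t}
      ≤ ENNReal.ofReal
          (Real.exp (θ * t - (1 - Real.exp (-θ)) * connProb M r * (J.card : ℝ))) := by
  set s := Real.exp (-θ) with hs_def
  have hs : s ∈ Icc (0 : ℝ) 1 := ⟨(Real.exp_pos _).le, Real.exp_le_one_iff.2 (by linarith)⟩
  set f : Ω → ENNReal := fun ω => ENNReal.ofReal (Real.exp (θ * t)) *
    ∏ j ∈ J, (if edge M r ω i j then ENNReal.ofReal s else 1)
  have hfm : Measurable f := (Finset.measurable_prod _ fun j _ =>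
    Measurable.ite (measurableSet_edge M hr i j) measurable_const measurable_const).const_mul _
  have hsub : {ω | (edgeCount M r ω i J : ℝ) < t} ⊆ {ω | 1 ≤ f ω} := by
    intro ω hω
    have hprod : ∏ j ∈ J, (if edge M r ω i j then ENNReal.ofReal s else 1)
        = ENNReal.ofReal s ^ edgeCount M r ω i J := by
      rw [Finset.prod_ite, Finset.prod_const, Finset.prod_const_one, mul_one, edgeCount]
    change 1 ≤ ENNReal.ofReal (Real.exp (θ * t)) * _
    replace hω : (edgeCount M r ω i J : ℝ) < t := hω
    rw [hprod, ← ENNReal.ofReal_pow hs.1, ← ENNReal.ofReal_mul (Real.exp_pos _).le,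
      ENNReal.one_le_ofReal, hs_def, ← Real.exp_nat_mul, ← Real.exp_add]
    exact Real.one_le_exp (by nlinarith)
  have hmarkov := mul_meas_ge_le_lintegral (μ := P) hfm 1
  rw [one_mul] at hmarkov
  refine (measure_mono hsub).trans (hmarkov.trans ?_)
  rw [lintegral_const_mul' _ _ ENNReal.ofReal_ne_top, lintegral_prod_edge M hr hs hi hJ hiJ]
  have hle : 1 - (1 - s) * connProb M r ≤ Real.exp (-((1 - s) * connProb M r)) := by
    linarith [Real.add_one_le_exp (-((1 - s) * connProb M r))]
  calc ENNReal.ofReal (Real.exp (θ * t)) * ENNReal.ofReal (1 - (1 - s) * connProb M r) ^ J.card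
      ≤ ENNReal.ofReal (Real.exp (θ * t)) *
          ENNReal.ofReal (Real.exp (-((1 - s) * connProb M r))) ^ J.card := by
        gcongr
    _ = _ := by
        rw [← ENNReal.ofReal_pow (Real.exp_pos _).le, ← ENNReal.ofReal_mul (Real.exp_pos _).le,
          ← Real.exp_nat_mul, ← Real.exp_add]
        congr 2
        ring

open scoped Classical in
lemma measure_edge_le [IsProbabilityMeasure P] (M : Model d P) {r : ℝ} (hr : 0 < r)
    {i j : ℕ} (hi : 1 ≤ i) (hj : 1 ≤ j) (hij : i ≠ j) :
    P {ω | edge M r ω i j} ≤ ENNReal.ofReal (connProb M r) := by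
  have h := lintegral_prod_edge M hr (s := 0) (by simp) hi (J := {j}) (by simpa) (by simpa)
  have hcompl : ∫⁻ ω, (if edge M r ω i j then 0 else 1) ∂P = P {ω | edge M r ω i j}ᶜ := by
    rw [← lintegral_indicator_one (measurableSet_edge M hr i j).compl]
    refine lintegral_congr fun ω => ?_
    by_cases hω : edge M r ω i j <;> simp [hω]
  simp only [Finset.prod_singleton, ENNReal.ofReal_zero, hcompl, sub_zero, one_mul,
    Finset.card_singleton, pow_one] at h
  have hadd := prob_add_prob_compl (μ := P) (measurableSet_edge M hr i j)
  refine ENNReal.le_of_add_le_add_right (measure_ne_top P {ω | edge M r ω i j}ᶜ) ?_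
  rw [hadd, h]
  refine le_trans ?_ ENNReal.ofReal_add_le
  simp

lemma edgeCount_eq_sum (M : Model d P) (r : ℝ) (ω : Ω) (i : ℕ) (J : Finset ℕ) :
    (edgeCount M r ω i J : ENNReal) = ∑ j ∈ J, {ω | edge M r ω i j}.indicator 1 ω := by
  classical
  rw [edgeCount, Finset.card_filter, Nat.cast_sum]
  refine Finset.sum_congr rfl fun j _ => ?_
  by_cases h : edge M r ω i j <;> simp [h]

lemma measurable_edgeCount (M : Model d P) {r : ℝ} (hr : 0 < r) (i : ℕ) (J : Finset ℕ) :
    Measurable fun ω => (edgeCount M r ω i J : ENNReal) := by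
  simp_rw [edgeCount_eq_sum]
  exact Finset.measurable_sum _ fun j _ => measurable_one.indicator (measurableSet_edge M hr i j)

lemma lintegral_edgeCount_le [IsProbabilityMeasure P] (M : Model d P) {r : ℝ} (hr : 0 < r)
    {i : ℕ} (hi : 1 ≤ i) {J : Finset ℕ} (hJ : ∀ j ∈ J, 1 ≤ j) (hiJ : i ∉ J) :
    ∫⁻ ω, edgeCount M r ω i J ∂P ≤ J.card * ENNReal.ofReal (connProb M r) := by
  simp_rw [edgeCount_eq_sum]
  rw [lintegral_finsetSum _ fun j _ => measurable_one.indicator (measurableSet_edge M hr i j),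
    ← nsmul_eq_mul]
  refine Finset.sum_le_card_nsmul _ _ _ fun j hj => ?_
  rw [lintegral_indicator_one (measurableSet_edge M hr i j)]
  exact measure_edge_le M hr hi (hJ j hj) fun h => hiJ (h ▸ hj)

lemma finite_adj (M : Model d P) (n : ℕ) (r : ℝ) (ω : Ω) (i : ℕ) :
    {j | adj M n r ω i j}.Finite :=
  (finite_Iic (M.N n ω)).subset fun _ hj => hj.2.2.2.2.1

lemma edgeCount_le_deg (M : Model d P) {n : ℕ} {r r' : ℝ} {ω : Ω} {i : ℕ} {J : Finset ℕ}
    (hr' : 0 < r') (hrr : r' ≤ r) (hi : 1 ≤ i) (hiN : i ≤ M.N n ω)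
    (hJ : ∀ j ∈ J, i ≠ j ∧ 1 ≤ j ∧ j ≤ M.N n ω) :
    edgeCount M r' ω i J ≤ deg M n r ω i := by
  classical
  rw [edgeCount, ← ncard_coe_finset]
  refine ncard_le_ncard (fun j hj => ?_) (finite_adj M n r ω i)
  obtain ⟨hjJ, hj⟩ := Finset.mem_filter.1 (Finset.mem_coe.1 hj)
  obtain ⟨h1, h2, h3⟩ := hJ j hjJ
  have h0 := torusDist_nonneg (M.X i ω) (M.X j ω)
  refine ⟨h1, hi, h2, hiN, h3, hj.trans (M.g_antitone ?_ ?_ ?_)⟩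
  · exact div_nonneg h0 (hr'.le.trans hrr)
  · exact div_nonneg h0 hr'.le
  · exact div_le_div_of_nonneg_left h0 hr' hrr

lemma deg_le_edgeCount (M : Model d P) {n : ℕ} {r : ℝ} {ω : Ω} {i : ℕ} {J : Finset ℕ}
    (hJ : ∀ j, i ≠ j → 1 ≤ j → j ≤ M.N n ω → j ∈ J) :
    deg M n r ω i ≤ edgeCount M r ω i J := by
  classical
  rw [edgeCount, ← ncard_coe_finset]
  refine ncard_le_ncard (fun j hj => ?_) (Finset.finite_toSet _)
  exact Finset.mem_coe.2 (Finset.mem_filter.2 ⟨hJ j hj.1 hj.2.2.1 hj.2.2.2.2.1, hj.2.2.2.2.2⟩)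

/-! ### Poisson counts -/

lemma ae_eventually_notMem_of_le {s : ℕ → Set Ω} {a : ℕ → ℝ} (ha : Summable a)
    (h0 : ∀ k, 0 ≤ a k) (hle : ∀ᶠ k in atTop, P (s k) ≤ ENNReal.ofReal (a k)) :
    ∀ᵐ ω ∂P, ∀ᶠ k in atTop, ω ∉ s k := by
  obtain ⟨K, hK⟩ := eventually_atTop.1 hle
  have hfin : ∑' k, P (if K ≤ k then s k else ∅) ≠ ⊤ := by
    refine ne_top_of_le_ne_top ?_ (ENNReal.tsum_le_tsum (g := fun k => ENNReal.ofReal (a k))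
      fun k => ?_)
    · rw [← ENNReal.ofReal_tsum_of_nonneg h0 ha]
      exact ENNReal.ofReal_ne_top
    · by_cases hk : K ≤ k
      · simpa [hk] using hK k hk
      · simp [hk]
  filter_upwards [ae_eventually_notMem hfin] with ω hω
  filter_upwards [hω, eventually_ge_atTop K] with k hk hKk
  simpa [hKk] using hk

lemma lintegral_pow_N (M : Model d P) (n : ℕ) {y : ℝ} (hy : 0 ≤ y) :
    ∫⁻ ω, ENNReal.ofReal (y ^ M.N n ω) ∂P = ENNReal.ofReal (Real.exp (n * (y - 1))) := by
  have hmap : ∫⁻ ω, ENNReal.ofReal (y ^ M.N n ω) ∂P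
      = ∫⁻ k, ENNReal.ofReal (y ^ k) ∂(P.map (M.N n)) :=
    (lintegral_map (f := fun k : ℕ => ENNReal.ofReal (y ^ k)) (measurable_of_countable _)
      (M.N_meas n)).symm
  have hterm : ∀ k : ℕ, ENNReal.ofReal (y ^ k) * P.map (M.N n) {k}
      = ENNReal.ofReal (Real.exp (n * (y - 1)) *
          (Real.exp (-(n * y)) * (n * y) ^ k / k.factorial)) := by
    intro k
    rw [Measure.map_apply (M.N_meas n) (measurableSet_singleton k)]
    have : M.N n ⁻¹' {k} = {ω | M.N n ω = k} := rfl
    rw [this, M.N_poisson, ← ENNReal.ofReal_mul (pow_nonneg hy k)]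
    congr 1
    have hexp : Real.exp (-(n : ℝ)) = Real.exp (n * (y - 1)) * Real.exp (-(n * y)) := by
      rw [← Real.exp_add]; ring_nf
    rw [hexp, mul_pow]
    ring
  have hsum : HasSum (fun k : ℕ => Real.exp (-(n * y)) * (n * y) ^ k / k.factorial) 1 :=
    hasSum_one_poissonMeasure ⟨n * y, by positivity⟩
  rw [hmap, lintegral_countable']
  simp_rw [hterm]
  rw [← ENNReal.ofReal_tsum_of_nonneg (fun k => by positivity) (hsum.summable.mul_left _),
    tsum_mul_left, hsum.tsum_eq, mul_one]

lemma measure_exp_le_pow_N_le (M : Model d P) (n : ℕ) {y : ℝ} (hy : 0 ≤ y) (a : ℝ) :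
    P {ω | Real.exp a ≤ y ^ M.N n ω} ≤ ENNReal.ofReal (Real.exp (n * (y - 1) - a)) := by
  have hm : Measurable fun ω => ENNReal.ofReal (y ^ M.N n ω) :=
    (measurable_of_countable fun k : ℕ => ENNReal.ofReal (y ^ k)).comp (M.N_meas n)
  have h := mul_meas_ge_le_lintegral (μ := P) hm (ENNReal.ofReal (Real.exp a))
  rw [lintegral_pow_N M n hy] at h
  have hset : {ω | Real.exp a ≤ y ^ M.N n ω}
      = {ω | ENNReal.ofReal (Real.exp a) ≤ ENNReal.ofReal (y ^ M.N n ω)} := by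
    ext ω
    exact (ENNReal.ofReal_le_ofReal_iff (pow_nonneg hy _)).symm
  rw [hset, sub_eq_add_neg, Real.exp_add, Real.exp_neg, ENNReal.ofReal_mul (Real.exp_pos _).le,
    ENNReal.ofReal_inv_of_pos (Real.exp_pos _), ← div_eq_mul_inv]
  rw [ENNReal.le_div_iff_mul_le (by simp [Real.exp_pos]) (by simp), mul_comm]
  exact h

lemma summable_exp_neg_mul_nat {κ : ℝ} (hκ : 0 < κ) :
    Summable fun n : ℕ => Real.exp (-(κ * n)) := by
  have h := Real.summable_exp_nat_mul_iff.2 (neg_lt_zero.2 hκ)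
  refine h.congr fun n => ?_
  ring_nf

lemma ae_eventually_N_le (M : Model d P) : ∀ᵐ ω ∂P, ∀ᶠ n in atTop, M.N n ω ≤ 2 * n := by
  have hκ : 0 < 3 - Real.exp 1 := by linarith [Real.exp_one_lt_d9]
  have h : ∀ᵐ ω ∂P, ∀ᶠ n : ℕ in atTop, ω ∉ {ω | Real.exp (2 * n) ≤ Real.exp 1 ^ M.N n ω} := by
    refine ae_eventually_notMem_of_le (summable_exp_neg_mul_nat hκ)
      (fun n => (Real.exp_pos _).le) (Eventually.of_forall fun n => ?_)
    refine (measure_exp_le_pow_N_le M n (Real.exp_pos 1).le _).trans (le_of_eq ?_)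
    ring_nf
  filter_upwards [h] with ω hω
  filter_upwards [hω] with n hn
  by_contra hlt
  push Not at hlt
  refine hn ?_
  rw [← Real.exp_nat_mul, mul_one]
  exact Real.exp_le_exp.2 (by exact_mod_cast hlt.le)

lemma ae_eventually_le_N (M : Model d P) {ε : ℝ} (h0 : 0 < ε) (h1 : ε < 1) :
    ∀ᵐ ω ∂P, ∀ᶠ n in atTop, (1 - ε) * (n : ℕ) ≤ M.N n ω := by
  have hpos : 0 < 1 - ε := by linarith
  have hlog : Real.log (1 - ε) < 0 := Real.log_neg hpos (by linarith)
  have hκ : 0 < ε + (1 - ε) * Real.log (1 - ε) := by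
    have h := Real.log_lt_sub_one_of_pos (inv_pos.2 hpos) (by
      intro h
      rw [inv_eq_one] at h
      linarith)
    rw [Real.log_inv] at h
    have h2 : (1 - ε) * (-Real.log (1 - ε)) < (1 - ε) * ((1 - ε)⁻¹ - 1) :=
      mul_lt_mul_of_pos_left h hpos
    rw [mul_sub, mul_inv_cancel₀ hpos.ne'] at h2
    linarith
  have h : ∀ᵐ ω ∂P, ∀ᶠ n : ℕ in atTop,
      ω ∉ {ω | Real.exp ((1 - ε) * n * Real.log (1 - ε)) ≤ (1 - ε) ^ M.N n ω} := by
    refine ae_eventually_notMem_of_le (summable_exp_neg_mul_nat hκ)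
      (fun n => (Real.exp_pos _).le) (Eventually.of_forall fun n => ?_)
    refine (measure_exp_le_pow_N_le M n hpos.le _).trans (le_of_eq ?_)
    ring_nf
  filter_upwards [h] with ω hω
  filter_upwards [hω] with n hn
  by_contra hlt
  push Not at hlt
  refine hn ?_
  have hpow : (1 - ε) ^ M.N n ω = Real.exp (M.N n ω * Real.log (1 - ε)) := by
    rw [Real.exp_nat_mul, Real.exp_log hpos]
  rw [hpow]
  exact Real.exp_le_exp.2 (mul_le_mul_of_nonpos_right hlt.le hlog.le)

/-! ### The scale `r̂_n(γ)` -/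

lemma rhat_pow (M : Model d P) (hd : d ≠ 0) {γ : ℝ} (hγ : 0 < γ) {n : ℕ} (hn : 1 ≤ n) :
    rhat M γ n ^ d = γ * Real.log n / (M.α * n) := by
  have hα := M.α_pos
  have hlog : 0 ≤ Real.log n := Real.log_natCast_nonneg n
  rw [rhat, one_div, Real.rpow_inv_natCast_pow (by positivity) hd]

lemma rhat_pos (M : Model d P) {γ : ℝ} (hγ : 0 < γ) {n : ℕ} (hn : 2 ≤ n) : 0 < rhat M γ n := by
  have hα := M.α_pos
  have hn' : (1 : ℝ) < n := by exact_mod_cast hn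
  have hlog : 0 < Real.log n := Real.log_pos hn'
  unfold rhat
  positivity

lemma rhat_le_rhat (M : Model d P) {γ : ℝ} (hγ : 0 < γ) {n m : ℕ} (hn : 3 ≤ n) (hnm : n ≤ m) :
    rhat M γ m ≤ rhat M γ n := by
  have hα := M.α_pos
  have hlog : 0 ≤ Real.log m := Real.log_natCast_nonneg m
  have hn' : Real.exp 1 ≤ n := by
    have : (3 : ℝ) ≤ n := by exact_mod_cast hn
    linarith [Real.exp_one_lt_d9]
  have hnm' : (n : ℝ) ≤ m := by exact_mod_cast hnm
  have h := Real.log_div_self_antitoneOn (mem_Ici.2 hn') (mem_Ici.2 (hn'.trans hnm')) hnm'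
  refine Real.rpow_le_rpow (by positivity) ?_ (by positivity)
  rw [mul_div_mul_comm, mul_div_mul_comm]
  exact mul_le_mul_of_nonneg_left h (by positivity)

lemma tendsto_rhat (M : Model d P) (hd : d ≠ 0) (γ : ℝ) :
    Tendsto (fun n => rhat M γ n) atTop (nhds 0) := by
  have hd' : (0 : ℝ) < 1 / d := by positivity
  have h1 : Tendsto (fun n : ℕ => Real.log n / n) atTop (nhds 0) :=
    Real.isLittleO_log_id_atTop.tendsto_div_nhds_zero.comp tendsto_natCast_atTop_atTop
  have h2 : Tendsto (fun n : ℕ => γ / M.α * (Real.log n / n)) atTop (nhds 0) := by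
    simpa using h1.const_mul (γ / M.α)
  have h3 := h2.rpow_const (p := 1 / (d : ℝ)) (Or.inr hd'.le)
  rw [Real.zero_rpow hd'.ne'] at h3
  refine h3.congr fun n => ?_
  rw [rhat, mul_div_mul_comm]

lemma tendsto_connProb_rhat_mul (M : Model d P) (hd : d ≠ 0) {γ : ℝ} (hγ : 0 < γ)
    {m : ℕ → ℕ} (hm : Tendsto m atTop atTop) {l : ℕ → ℝ} {b : ℝ}
    (hl : Tendsto (fun k => l k / m k) atTop (nhds b)) :
    Tendsto (fun k => connProb M (rhat M γ (m k)) * l k / Real.log (m k)) atTop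
      (nhds (γ * b)) := by
  have hα := M.α_pos
  have hpos : ∀ᶠ k in atTop, 0 < rhat M γ (m k) := by
    filter_upwards [hm.eventually_ge_atTop 2] with k hk using rhat_pos M hγ hk
  have h := ((tendsto_connProb_div M hpos ((tendsto_rhat M hd γ).comp hm)).mul_const
    (γ / M.α)).mul hl
  have hlim : M.α * (γ / M.α) * b = γ * b := by field_simp
  rw [hlim] at h
  refine h.congr' ?_
  filter_upwards [hm.eventually_ge_atTop 2] with k hk
  have hk' : (1 : ℝ) < m k := by exact_mod_cast hk
  have hlog : 0 < Real.log (m k) := Real.log_pos hk'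
  have hm0 : (0 : ℝ) < m k := by linarith
  rw [rhat_pow M hd hγ (by omega)]
  field_simp

/-! ### Lower bound for the minimum degree -/

lemma one_lt_mul_H {γ β : ℝ} (hγ : 1 < γ) (hβ0 : 0 < β) (hβ : β < γ * Hminusinv (1 / γ)) :
    β < γ ∧ 1 < γ * H (β / γ) := by
  have hγ0 : 0 < γ := by linarith
  have hlt : β / γ < Hminusinv (1 / γ) := by rwa [div_lt_iff₀' hγ0]
  have hbdd : BddBelow {x : ℝ | 0 ≤ x ∧ H x ≤ 1 / γ} := ⟨0, fun x hx => hx.1⟩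
  have h1 : Hminusinv (1 / γ) ≤ 1 := csInf_le hbdd ⟨zero_le_one, by simp [H, hγ0.le]⟩
  refine ⟨by rw [← div_lt_one hγ0]; linarith, ?_⟩
  by_contra hle
  push Not at hle
  refine notMem_of_lt_csInf hlt hbdd ⟨by positivity, ?_⟩
  rwa [le_div_iff₀' hγ0]

lemma exists_chernoff_exponent {γ β : ℝ} (hγ : 1 < γ) (hβ0 : 0 < β)
    (hβ : β < γ * Hminusinv (1 / γ)) :
    ∃ θ : ℝ, 0 ≤ θ ∧ 1 < γ * (1 - Real.exp (-θ)) - θ * β := by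
  obtain ⟨hlt, hH⟩ := one_lt_mul_H hγ hβ0 hβ
  have hγ0 : 0 < γ := by linarith
  have hx : 0 < β / γ := by positivity
  refine ⟨-Real.log (β / γ), ?_, ?_⟩
  · exact neg_nonneg.2 (Real.log_nonpos hx.le ((div_le_one hγ0).2 hlt.le))
  · rw [neg_neg, Real.exp_log hx]
    have : γ * H (β / γ) = γ * (1 - β / γ) - -Real.log (β / γ) * β := by
      rw [H]; field_simp; ring
    linarith

lemma exists_between_of_strictMono {f : ℕ → ℕ} (hf : StrictMono f) {K n : ℕ} (hn : f K ≤ n) :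
    ∃ k, K ≤ k ∧ f k ≤ n ∧ n ≤ f (k + 1) := by
  classical
  have hex : ∃ j, n < f j := ⟨n + 1, (Nat.lt_succ_self n).trans_le (hf.le_apply)⟩
  have hspec := Nat.find_spec hex
  have hK : K < Nat.find hex := hf.lt_iff_lt.1 (hn.trans_lt hspec)
  refine ⟨Nat.find hex - 1, by omega, ?_, ?_⟩
  · exact not_lt.1 (Nat.find_min hex (m := Nat.find hex - 1) (by omega))
  · rw [Nat.sub_add_cancel (by omega)]
    exact hspec.le

/-- Some vertex among the first `2 m` has few edges at scale `r̂_m(γ)` to the first `L` vertices. -/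
def lowDegreeEvent (M : Model d P) (γ β : ℝ) (m L : ℕ) : Set Ω :=
  ⋃ i ∈ Finset.Icc 1 (2 * m),
    {ω | (edgeCount M (rhat M γ m) ω i ((Finset.Icc 1 L).erase i) : ℝ) < β * Real.log m}

lemma measure_lowDegreeEvent_le [IsProbabilityMeasure P] (M : Model d P) {γ β θ η : ℝ}
    (hγ : 0 < γ) (hθ : 0 ≤ θ) {m L : ℕ} (hm : 2 ≤ m)
    (h : 1 + η + θ * β ≤
      (1 - Real.exp (-θ)) * (connProb M (rhat M γ m) * ((L : ℝ) - 1) / Real.log m)) :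
    P (lowDegreeEvent M γ β m L) ≤ ENNReal.ofReal (2 * Real.exp (-(η * Real.log m))) := by
  have hm1 : (1 : ℝ) < m := by exact_mod_cast hm
  have hlog : 0 < Real.log m := Real.log_pos hm1
  have hm0 : (0 : ℝ) < m := by linarith
  have hr := rhat_pos M hγ hm
  have hp : 0 ≤ connProb M (rhat M γ m) :=
    setIntegral_nonneg measurableSet_cube fun w _ =>
      (M.g_mem _ (div_nonneg (norm_nonneg w) hr.le)).1
  have hs : 0 ≤ 1 - Real.exp (-θ) := by
    linarith [Real.exp_le_one_iff.2 (by linarith : -θ ≤ 0)]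
  have hpt : ∀ i ∈ Finset.Icc 1 (2 * m),
      P {ω | (edgeCount M (rhat M γ m) ω i ((Finset.Icc 1 L).erase i) : ℝ) < β * Real.log m}
        ≤ ENNReal.ofReal (Real.exp (-((1 + η) * Real.log m))) := by
    intro i hi
    refine (measure_edgeCount_lt_le M hr hθ _ (Finset.mem_Icc.1 hi).1
      (fun j hj => (Finset.mem_Icc.1 (Finset.mem_of_mem_erase hj)).1)
      (Finset.notMem_erase i _)).trans ?_
    refine ENNReal.ofReal_le_ofReal (Real.exp_le_exp.2 ?_)
    have hcard : (L : ℝ) - 1 ≤ (((Finset.Icc 1 L).erase i).card : ℝ) := by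
      have := Finset.pred_card_le_card_erase (s := Finset.Icc 1 L) (a := i)
      rw [Nat.card_Icc] at this
      have h2 : L ≤ ((Finset.Icc 1 L).erase i).card + 1 := by omega
      have h3 : (L : ℝ) ≤ (((Finset.Icc 1 L).erase i).card : ℝ) + 1 := by exact_mod_cast h2
      linarith
    have h1 : (1 + η + θ * β) * Real.log m
        ≤ (1 - Real.exp (-θ)) * connProb M (rhat M γ m) * ((L : ℝ) - 1) := by
      have := mul_le_mul_of_nonneg_right h hlog.le
      refine this.trans (le_of_eq ?_)
      field_simp
    have h2 := mul_le_mul_of_nonneg_left hcard (mul_nonneg hs hp)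
    linarith
  refine (measure_biUnion_finset_le _ _).trans ((Finset.sum_le_card_nsmul _ _ _ hpt).trans ?_)
  rw [Nat.card_Icc, nsmul_eq_mul, ← ENNReal.ofReal_natCast, ← ENNReal.ofReal_mul (by positivity)]
  refine ENNReal.ofReal_le_ofReal (le_of_eq ?_)
  have hexp : Real.exp (-((1 + η) * Real.log m)) = (m : ℝ)⁻¹ * Real.exp (-(η * Real.log m)) := by
    rw [← Real.exp_log (inv_pos.2 hm0), ← Real.exp_add, Real.log_inv]
    ring_nf
  rw [hexp]
  push_cast [Nat.add_sub_cancel]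
  field_simp

lemma ae_eventually_le_minDeg [IsProbabilityMeasure P] (M : Model d P) (hd : d ≠ 0) {γ β : ℝ}
    (hγ : 1 < γ) (hβ0 : 0 < β) (hβ : β < γ * Hminusinv (1 / γ)) :
    ∀ᵐ ω ∂P, ∀ᶠ n in atTop, β * Real.log (n : ℕ) ≤ minDeg M n (rhat M γ n) ω := by
  have hγ0 : 0 < γ := by linarith
  obtain ⟨θ, hθ, hexp⟩ := exists_chernoff_exponent hγ hβ0 hβ
  obtain ⟨ε, hε0, hε1, hεexp⟩ : ∃ ε : ℝ, 0 < ε ∧ ε < 1 ∧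
      1 < (1 - Real.exp (-θ)) * (γ * (1 - ε)) - θ * β := by
    have hcont : Continuous fun ε : ℝ => (1 - Real.exp (-θ)) * (γ * (1 - ε)) - θ * β := by
      fun_prop
    have hev : ∀ᶠ ε in nhds (0 : ℝ), 1 < (1 - Real.exp (-θ)) * (γ * (1 - ε)) - θ * β :=
      hcont.continuousAt.eventually (lt_mem_nhds (by simp only [sub_zero, mul_one]; linarith))
    obtain ⟨ε, h1, h2⟩ := ((hev.filter_mono nhdsWithin_le_nhds).and
      (Ioo_mem_nhdsGT (zero_lt_one (α := ℝ)))).exists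
    exact ⟨ε, h2.1, h2.2, h1⟩
  obtain ⟨η, hη1, hη2⟩ := exists_between
    (show 0 < (1 - Real.exp (-θ)) * (γ * (1 - ε)) - θ * β - 1 by linarith)
  obtain ⟨a, ha⟩ := exists_nat_gt (2 / η)
  have haη : 2 ≤ a * η := by rw [div_lt_iff₀ hη1] at ha; exact ha.le
  have ha0 : a ≠ 0 := by rintro rfl; norm_num at haη
  set f : ℕ → ℕ := fun k => (k + 3) ^ a with hf
  have hfmono : StrictMono f := fun i j hij => Nat.pow_lt_pow_left (by omega) ha0
  have hf3 : ∀ k, 3 ≤ f k := fun k => by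
    calc 3 ≤ k + 3 := by omega
      _ ≤ (k + 3) ^ a := Nat.le_self_pow ha0 _
  have hfr : ∀ k, (0 : ℝ) < f k := fun k => by exact_mod_cast (by linarith [hf3 k] : 0 < f k)
  have hmtop : Tendsto (fun k => f (k + 1)) atTop atTop :=
    hfmono.tendsto_atTop.comp (tendsto_add_atTop_nat 1)
  have hratio : Tendsto (fun k => (f k : ℝ) / f (k + 1)) atTop (nhds 1) := by
    have h1 : Tendsto (fun k : ℕ => 1 - 1 / ((k : ℝ) + 4)) atTop (nhds (1 - 0)) := by
      refine tendsto_const_nhds.sub (tendsto_const_nhds.div_atTop ?_)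
      exact tendsto_atTop_add_const_right _ _ tendsto_natCast_atTop_atTop
    have h2 := h1.pow a
    rw [sub_zero, one_pow] at h2
    refine h2.congr fun k => ?_
    simp only [hf]
    push_cast
    rw [← div_pow]
    congr 1
    have : (k : ℝ) + 4 ≠ 0 := by positivity
    have h5 : (k : ℝ) + 1 + 3 = k + 4 := by ring
    rw [h5]
    field_simp
    ring
  have hl : Tendsto (fun k => ((1 - ε) * f k - 1) / (f (k + 1) : ℕ)) atTop (nhds (1 - ε)) := by
    have h1 : Tendsto (fun k => (1 : ℝ) / (f (k + 1) : ℕ)) atTop (nhds 0) :=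
      tendsto_const_nhds.div_atTop (tendsto_natCast_atTop_atTop.comp hmtop)
    have h2 := (hratio.const_mul (1 - ε)).sub h1
    rw [mul_one, sub_zero] at h2
    refine h2.congr fun k => ?_
    ring
  have hlim := (tendsto_connProb_rhat_mul M hd hγ0 hmtop hl).const_mul (1 - Real.exp (-θ))
  have hbad : ∀ᵐ ω ∂P, ∀ᶠ k in atTop,
      ω ∉ lowDegreeEvent M γ β (f (k + 1)) ⌈(1 - ε) * f k⌉₊ := by
    have hsum : Summable fun k : ℕ => 2 * Real.exp (-(η * Real.log (f (k + 1)))) := by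
      have h1 : Summable fun k : ℕ => 2 * (1 / ((k + 4 : ℕ) : ℝ) ^ 2) :=
        ((summable_nat_add_iff 4).2 (Real.summable_one_div_nat_pow.2 one_lt_two)).mul_left 2
      refine Summable.of_nonneg_of_le (fun k => by positivity) (fun k => ?_) h1
      have hk : (0 : ℝ) < ((k + 4 : ℕ) : ℝ) := by positivity
      have hlogk : 0 ≤ Real.log ((k + 4 : ℕ) : ℝ) := Real.log_natCast_nonneg _
      have h2 : Real.log (f (k + 1) : ℕ) = a * Real.log ((k + 4 : ℕ) : ℝ) := by
        simp only [hf]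
        rw [Nat.cast_pow, Real.log_pow]
      have h3 : 1 / ((k + 4 : ℕ) : ℝ) ^ 2 = Real.exp (-(2 * Real.log ((k + 4 : ℕ) : ℝ))) := by
        rw [Real.exp_neg, two_mul, Real.exp_add, Real.exp_log hk, one_div, pow_two]
      rw [h2, h3]
      gcongr 2 * Real.exp (-?_)
      nlinarith
    refine ae_eventually_notMem_of_le hsum (fun k => by positivity) ?_
    filter_upwards [hlim.eventually (lt_mem_nhds
      (show 1 + η + θ * β < (1 - Real.exp (-θ)) * (γ * (1 - ε)) by linarith))] with k hk
    refine measure_lowDegreeEvent_le M hγ0 hθ (by linarith [hf3 (k + 1)]) (hk.le.trans ?_)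
    have hlog : 0 ≤ Real.log (f (k + 1) : ℕ) := Real.log_natCast_nonneg _
    have hp : 0 ≤ connProb M (rhat M γ (f (k + 1))) :=
      setIntegral_nonneg measurableSet_cube fun w _ => (M.g_mem _ (div_nonneg (norm_nonneg w)
        (rhat_pos M hγ0 (by linarith [hf3 (k + 1)])).le)).1
    have hs : 0 ≤ 1 - Real.exp (-θ) := by
      linarith [Real.exp_le_one_iff.2 (by linarith : -θ ≤ 0)]
    have hceil := Nat.le_ceil ((1 - ε) * (f k : ℝ))
    gcongr
  filter_upwards [hbad, ae_eventually_N_le M, ae_eventually_le_N M hε0 hε1] with ω hω1 hω2 hω3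
  obtain ⟨K, hK⟩ := eventually_atTop.1
    (hω1.and ((hmtop.eventually hω2).and (hfmono.tendsto_atTop.eventually hω3)))
  filter_upwards [eventually_ge_atTop (f K)] with n hn
  obtain ⟨k, hKk, hkn, hnk⟩ := exists_between_of_strictMono hfmono hn
  obtain ⟨hgood, hNle, hNge⟩ := hK k hKk
  have hLN : ⌈(1 - ε) * (f k : ℝ)⌉₊ ≤ M.N n ω := (Nat.ceil_le.2 hNge).trans (M.N_mono ω hkn)
  have hN1 : 1 ≤ M.N n ω := by
    refine le_trans (Nat.one_le_ceil_iff.2 ?_) hLN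
    exact mul_pos (by linarith) (hfr k)
  have hne : {j : ℕ | ∃ i, 1 ≤ i ∧ i ≤ M.N n ω ∧ deg M n (rhat M γ n) ω i = j}.Nonempty :=
    ⟨_, 1, le_rfl, hN1, rfl⟩
  obtain ⟨i, hi1, hiN, hdeg⟩ := Nat.sInf_mem hne
  have hmin : minDeg M n (rhat M γ n) ω = deg M n (rhat M γ n) ω i := hdeg.symm
  have hcount : β * Real.log (f (k + 1) : ℕ) ≤ edgeCount M (rhat M γ (f (k + 1))) ω i
      ((Finset.Icc 1 ⌈(1 - ε) * (f k : ℝ)⌉₊).erase i) := by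
    by_contra hlt
    push Not at hlt
    refine hgood (mem_biUnion (x := i) ?_ hlt)
    exact Finset.mem_coe.2 (Finset.mem_Icc.2 ⟨hi1, (hiN.trans (M.N_mono ω hnk)).trans hNle⟩)
  have hle := edgeCount_le_deg M (n := n) (ω := ω) (i := i) (r := rhat M γ n)
    (J := (Finset.Icc 1 ⌈(1 - ε) * (f k : ℝ)⌉₊).erase i)
    (rhat_pos M hγ0 (by linarith [hf3 (k + 1)] : 2 ≤ f (k + 1)))
    (rhat_le_rhat M hγ0 ((hf3 k).trans hkn) hnk) hi1 hiN fun j hj => by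
      obtain ⟨hji, hj⟩ := Finset.mem_erase.1 hj
      obtain ⟨hj1, hjL⟩ := Finset.mem_Icc.1 hj
      exact ⟨hji.symm, hj1, hjL.trans hLN⟩
  have hlog : Real.log n ≤ Real.log (f (k + 1) : ℕ) := by
    refine Real.log_le_log ?_ (by exact_mod_cast hnk)
    exact_mod_cast (by linarith [hf3 k] : 0 < n)
  rw [hmin]
  calc β * Real.log n ≤ β * Real.log (f (k + 1) : ℕ) := by gcongr
    _ ≤ _ := hcount
    _ ≤ _ := by exact_mod_cast hle

/-! ### The minimum degree is not superlogarithmic -/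

lemma minDeg_le_deg_one (M : Model d P) (n : ℕ) (r : ℝ) (ω : Ω) :
    minDeg M n r ω ≤ deg M n r ω 1 := by
  by_cases hN : 1 ≤ M.N n ω
  · exact Nat.sInf_le ⟨1, le_rfl, hN, rfl⟩
  · have : {k : ℕ | ∃ i, 1 ≤ i ∧ i ≤ M.N n ω ∧ deg M n r ω i = k} = ∅ := by
      refine eq_empty_of_forall_notMem ?_
      rintro k ⟨i, hi, hiN, -⟩
      exact hN (hi.trans hiN)
    simp [minDeg, this]

lemma ae_frequently_minDeg_le [IsProbabilityMeasure P] (M : Model d P) (hd : d ≠ 0) {γ : ℝ}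
    (hγ : 0 < γ) :
    ∀ᵐ ω ∂P, ∃ C : ℝ, ∃ᶠ n : ℕ in atTop, (minDeg M n (rhat M γ n) ω : ℝ) / Real.log n ≤ C := by
  have hα := M.α_pos
  set D : ℕ → Ω → ENNReal := fun n ω =>
    (edgeCount M (rhat M γ (n + 2)) ω 1 (Finset.Icc 2 (2 * (n + 2))) : ENNReal) /
      ENNReal.ofReal (Real.log (n + 2 : ℕ)) with hD
  have hlog : ∀ n : ℕ, 0 < Real.log (n + 2 : ℕ) := fun n =>
    Real.log_pos (by exact_mod_cast (by omega : 1 < n + 2))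
  have hr : ∀ n : ℕ, 0 < rhat M γ (n + 2) := fun n => rhat_pos M hγ (by omega)
  have hDm : ∀ n, Measurable (D n) := fun n => (measurable_edgeCount M (hr n) _ _).div_const _
  have hDint : ∀ n, ∫⁻ ω, D n ω ∂P ≤ ENNReal.ofReal (2 * γ) := by
    intro n
    simp only [hD, div_eq_mul_inv]
    rw [lintegral_mul_const _ (measurable_edgeCount M (hr n) _ _), ← div_eq_mul_inv]
    refine ENNReal.div_le_of_le_mul ((lintegral_edgeCount_le M (hr n) le_rfl
      (fun j hj => by linarith [(Finset.mem_Icc.1 hj).1]) (by simp)).trans ?_)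
    have hcard : (Finset.Icc 2 (2 * (n + 2))).card ≤ 2 * (n + 2) := by
      rw [Nat.card_Icc]; omega
    have hcard' : ((Finset.Icc 2 (2 * (n + 2))).card : ℝ) ≤ 2 * (n + 2 : ℕ) := by
      exact_mod_cast hcard
    rw [← ENNReal.ofReal_natCast, ← ENNReal.ofReal_mul (by positivity),
      ← ENNReal.ofReal_mul (by positivity)]
    refine ENNReal.ofReal_le_ofReal ?_
    have hp := connProb_le M (hr n)
    rw [rhat_pow M hd hγ (by omega)] at hp
    have hn0 : (0 : ℝ) < (n + 2 : ℕ) := by positivity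
    have hlogn := hlog n
    calc ((Finset.Icc 2 (2 * (n + 2))).card : ℝ) * connProb M (rhat M γ (n + 2))
        ≤ 2 * (n + 2 : ℕ) * (M.α * (γ * Real.log (n + 2 : ℕ) / (M.α * (n + 2 : ℕ)))) := by
          refine mul_le_mul hcard' hp ?_ (by positivity)
          exact setIntegral_nonneg measurableSet_cube fun w _ =>
            (M.g_mem _ (div_nonneg (norm_nonneg w) (hr n).le)).1
      _ = 2 * γ * Real.log (n + 2 : ℕ) := by field_simp
  have hfatou : ∫⁻ ω, liminf (fun n => D n ω) atTop ∂P ≠ ⊤ := by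
    refine ne_top_of_le_ne_top (ENNReal.ofReal_ne_top (r := 2 * γ)) ((lintegral_liminf_le hDm).trans ?_)
    refine (liminf_le_liminf (Eventually.of_forall hDint)).trans (le_of_eq ?_)
    exact liminf_const _
  filter_upwards [ae_lt_top (Measurable.liminf hDm) hfatou, ae_eventually_N_le M] with ω hω hN
  obtain ⟨C, hC, hCtop⟩ := exists_between hω
  refine ⟨C.toReal, ?_⟩
  have hfreq : ∃ᶠ n in atTop, D n ω < C := frequently_lt_of_liminf_lt (by isBoundedDefault) hC
  have hshift : ∃ᶠ n : ℕ in atTop,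
      (minDeg M (n + 2) (rhat M γ (n + 2)) ω : ℝ) / Real.log (n + 2 : ℕ) ≤ C.toReal := by
    refine (hfreq.and_eventually ((tendsto_add_atTop_nat 2).eventually hN)).mono ?_
    rintro n ⟨hDn, hNn⟩
    have hle : minDeg M (n + 2) (rhat M γ (n + 2)) ω
        ≤ edgeCount M (rhat M γ (n + 2)) ω 1 (Finset.Icc 2 (2 * (n + 2))) :=
      (minDeg_le_deg_one M _ _ ω).trans (deg_le_edgeCount M fun j hj hj1 hjN =>
        Finset.mem_Icc.2 ⟨by omega, hjN.trans hNn⟩)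
    have hreal := ENNReal.toReal_mono hCtop.ne hDn.le
    simp only [hD] at hreal
    rw [ENNReal.toReal_div, ENNReal.toReal_natCast, ENNReal.toReal_ofReal (hlog n).le] at hreal
    refine le_trans ?_ hreal
    gcongr
  exact (tendsto_add_atTop_nat 2).frequently hshift

/-- Theorem 4(ii): for `γ > 1`, a.s. `liminf δ_n/log n ≥ γ H₋⁻¹(1/γ)`. -/
theorem minDeg_liminf_ge (hd : 2 ≤ d) [IsProbabilityMeasure P] (M : Model d P)
    {c : ℝ} (hc : (d : ℝ) < c)
    (hg : M.g =o[atTop] fun r : ℝ => r ^ (-c))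
    {γ : ℝ} (hγ : 1 < γ) :
    ∀ᵐ ω ∂P, γ * Hminusinv (1 / γ) ≤ Filter.liminf
      (fun n : ℕ => (minDeg M n (rhat M γ n) ω : ℝ) / Real.log n) atTop := by
  have hd0 : d ≠ 0 := by omega
  have hlow : ∀ᵐ ω ∂P, ∀ q : ℚ, 0 < (q : ℝ) → (q : ℝ) < γ * Hminusinv (1 / γ) →
      ∀ᶠ n in atTop, (q : ℝ) * Real.log (n : ℕ) ≤ minDeg M n (rhat M γ n) ω := by
    refine ae_all_iff.2 fun q => ?_
    by_cases hq : 0 < (q : ℝ) ∧ (q : ℝ) < γ * Hminusinv (1 / γ)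
    · filter_upwards [ae_eventually_le_minDeg M hd0 hγ hq.1 hq.2] with ω hω _ _ using hω
    · exact Eventually.of_forall fun ω h1 h2 => absurd ⟨h1, h2⟩ hq
  filter_upwards [hlow, ae_frequently_minDeg_le M hd0 (zero_lt_one.trans hγ)] with ω hω hfreq
  obtain ⟨C, hC⟩ := hfreq
  have hcobdd : IsCoboundedUnder (· ≥ ·) atTop
      (fun n : ℕ => (minDeg M n (rhat M γ n) ω : ℝ) / Real.log n) :=
    IsCoboundedUnder.of_frequently_le hC
  have hnonneg : 0 ≤ liminf (fun n : ℕ => (minDeg M n (rhat M γ n) ω : ℝ) / Real.log n) atTop :=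
    le_liminf_of_le hcobdd (Eventually.of_forall fun n =>
      div_nonneg (Nat.cast_nonneg _) (Real.log_natCast_nonneg n))
  by_contra hlt
  push Not at hlt
  obtain ⟨q, hq1, hq2⟩ := exists_rat_btwn hlt
  refine hq1.not_ge (le_liminf_of_le hcobdd ?_)
  filter_upwards [hω q (hnonneg.trans_lt hq1) hq2, eventually_ge_atTop 2] with n hn hn2
  have hn2' : (1 : ℝ) < n := by exact_mod_cast hn2
  rwa [le_div_iff₀ (Real.log_pos hn2')]

end RCM
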